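/- Let {x^k} be generated by the multiobjective MFISTA algorithm. Then for all i = 1,…,m and all k ≥ 0: F_i(x^k) ≤ F_i(x^0). -/

import Mathlib

open scoped RealInnerProductSpace

noncomputable abbrev E (n : ℕ) := EuclideanSpace ℝ (Fin n)

/-!
Every trial point `zᵏ` satisfies, for all `i`,
`Fᵢ(zᵏ) + ℓ/2 ‖zᵏ - xᵏ⁻¹‖² ≤ Fᵢ(xᵏ⁻¹) + ℓ/2 ‖yᵏ - xᵏ⁻¹‖²`: the proximal objective is `ℓ`-strongly
convex, so it grows quadratically around its minimizer `zᵏ`; it is at most `ℓ/2 ‖yᵏ - xᵏ⁻¹‖²` at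
`xᵏ⁻¹` by convexity, and by the descent lemma it is at least `Fᵢ(zᵏ) - Fᵢ(xᵏ⁻¹)` at `zᵏ`.
Both `tₖ / tₖ₊₁` and `(tₖ - 1) / tₖ₊₁` lie in `[0, 1]`, so extrapolation gives
`‖yᵏ⁺¹ - xᵏ‖ ≤ ‖zᵏ - xᵏ⁻¹‖`. Hence the energy `Fᵢ(xᵏ) + ℓ/2 ‖yᵏ⁺¹ - xᵏ‖²` is nonincreasing in `k`;
initially it equals `Fᵢ(x⁰)`.
-/

open Set Filter Topology Gradient

section NormedSpace

variable {V : Type*} [NormedAddCommGroup V] [NormedSpace ℝ V]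

theorem convexOn_iSup {ι : Type*} [Nonempty ι] {s : Set V} {f : ι → V → ℝ}
    (hs : Convex ℝ s) (hf : ∀ i, ConvexOn ℝ s (f i))
    (hbdd : ∀ w ∈ s, BddAbove (range fun i => f i w)) :
    ConvexOn ℝ s fun w => ⨆ i, f i w := by
  refine ⟨hs, fun p hp q hq a b ha hb hab => ciSup_le fun i => ?_⟩
  calc f i (a • p + b • q) ≤ a • f i p + b • f i q := (hf i).2 hp hq ha hb hab
    _ ≤ a • (⨆ j, f j p) + b • (⨆ j, f j q) := by
      gcongr
      · exact le_ciSup (hbdd p hp) i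
      · exact le_ciSup (hbdd q hq) i

theorem add_modulus_le_of_uniformConvexOn_of_isMinOn {s : Set V} {φ : ℝ → ℝ} {h : V → ℝ}
    {z x : V} (hconv : UniformConvexOn s φ h) (hz : z ∈ s) (hx : x ∈ s) (hmin : IsMinOn h s z) :
    h z + φ ‖z - x‖ ≤ h x := by
  have chord : ∀ r ∈ Ioo (0 : ℝ) 1, h z + (1 - r) * φ ‖z - x‖ ≤ h x := by
    rintro r ⟨hr₀, hr₁⟩
    have hmem : (1 - r) • z + r • x ∈ s :=
      hconv.1 hz hx (sub_nonneg.2 hr₁.le) hr₀.le (sub_add_cancel 1 r)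
    have hle : h z ≤ (1 - r) * h z + r * h x - (1 - r) * r * φ ‖z - x‖ :=
      (hmin hmem).trans (hconv.2 hz hx (sub_nonneg.2 hr₁.le) hr₀.le (sub_add_cancel 1 r))
    refine le_of_mul_le_mul_left ?_ hr₀
    linarith
  have hlim : Tendsto (fun r : ℝ => h z + (1 - r) * φ ‖z - x‖) (𝓝[>] 0)
      (𝓝 (h z + (1 - 0) * φ ‖z - x‖)) :=
    (Continuous.tendsto (by fun_prop) 0).mono_left nhdsWithin_le_nhds
  simpa only [sub_zero, one_mul] using le_of_tendsto hlim
    (mem_of_superset (Ioo_mem_nhdsGT zero_lt_one) chord)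

theorem hasDerivAt_comp_lineMap {f : V → ℝ} {f' : V →L[ℝ] ℝ} {a b : V} {r : ℝ}
    (hf : HasFDerivAt f f' (AffineMap.lineMap a b r)) :
    HasDerivAt (fun r : ℝ => f (AffineMap.lineMap a b r)) (f' (b - a)) r :=
  hf.comp_hasDerivAt r AffineMap.hasDerivAt_lineMap

theorem add_fderiv_sub_le_of_convexOn {s : Set V} {f : V → ℝ} {f' : V →L[ℝ] ℝ} {a b : V}
    (hconv : ConvexOn ℝ s f) (ha : a ∈ s) (hb : b ∈ s) (hf : HasFDerivAt f f' a) :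
    f a + f' (b - a) ≤ f b := by
  have hline : ConvexOn ℝ (AffineMap.lineMap a b ⁻¹' s) fun r : ℝ => f (AffineMap.lineMap a b r) :=
    hconv.comp_affineMap (AffineMap.lineMap a b)
  have hderiv : HasDerivAt (fun r : ℝ => f (AffineMap.lineMap a b r)) (f' (b - a)) 0 :=
    hasDerivAt_comp_lineMap (by rwa [AffineMap.lineMap_apply_zero])
  have hslope := hline.le_slope_of_hasDerivAt (x := 0) (y := 1) (by simpa using ha)
    (by simpa using hb) zero_lt_one hderiv
  simp only [slope_def_field, AffineMap.lineMap_apply_zero, AffineMap.lineMap_apply_one, sub_zero,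
    div_one] at hslope
  linarith

theorem le_add_fderiv_sub_add_sq_of_lipschitz {f : V → ℝ} {f' : V → V →L[ℝ] ℝ} {L : ℝ} {a : V}
    (hf : ∀ w, HasFDerivAt f (f' w) w) (hlip : ∀ w, ‖f' w - f' a‖ ≤ L * ‖w - a‖) (b : V) :
    f b ≤ f a + f' a (b - a) + L / 2 * ‖b - a‖ ^ 2 := by
  have hline (r : ℝ) : HasDerivAt (fun r : ℝ => f (AffineMap.lineMap a b r))
      (f' (AffineMap.lineMap a b r) (b - a)) r :=
    hasDerivAt_comp_lineMap (hf _)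
  have hparabola (r : ℝ) :
      HasDerivAt (fun r : ℝ => f a + r * f' a (b - a) + L / 2 * ‖b - a‖ ^ 2 * r ^ 2)
        (f' a (b - a) + L * r * ‖b - a‖ ^ 2) r := by
    have hlin := ((hasDerivAt_id r).mul_const (f' a (b - a))).const_add (f a)
    have hquad := (hasDerivAt_pow 2 r).const_mul (L / 2 * ‖b - a‖ ^ 2)
    refine (hlin.add hquad).congr_deriv ?_
    norm_num
    ring
  have hbound (r : ℝ) (hr : r ∈ Ico (0 : ℝ) 1) :
      f' (AffineMap.lineMap a b r) (b - a) ≤ f' a (b - a) + L * r * ‖b - a‖ ^ 2 := by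
    rw [← sub_le_iff_le_add']
    calc f' (AffineMap.lineMap a b r) (b - a) - f' a (b - a)
        ≤ ‖f' (AffineMap.lineMap a b r) - f' a‖ * ‖b - a‖ :=
          (le_abs_self _).trans ((f' (AffineMap.lineMap a b r) - f' a).le_opNorm (b - a))
      _ ≤ L * ‖AffineMap.lineMap a b r - a‖ * ‖b - a‖ := by gcongr; exact hlip _
      _ = L * r * ‖b - a‖ ^ 2 := by
        rw [AffineMap.lineMap_apply_module', add_sub_cancel_right, norm_smul,
          Real.norm_of_nonneg hr.1]
        ring
  have hle := image_le_of_deriv_right_le_deriv_boundary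
    (fun r _ => (hline r).continuousAt.continuousWithinAt)
    (fun r _ => (hline r).hasDerivWithinAt) (by simp)
    (fun r _ => (hparabola r).continuousAt.continuousWithinAt)
    (fun r _ => (hparabola r).hasDerivWithinAt) hbound (right_mem_Icc.2 zero_le_one)
  simpa using hle

theorem norm_extrapolation_sub_le {x x' y' z : V} {t t' : ℝ} (ht : 1 ≤ t) (htt' : t ≤ t')
    (hx' : x' = z ∨ x' = x)
    (hy' : y' = x' + (t / t') • (z - x') + ((t - 1) / t') • (x' - x)) :
    ‖y' - x'‖ ≤ ‖z - x‖ := by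
  have contract {c : ℝ} (hc₀ : 0 ≤ c) (hc : c ≤ t') : ‖(c / t') • (z - x)‖ ≤ ‖z - x‖ := by
    have ht' : 0 ≤ t' := hc₀.trans hc
    rw [norm_smul, Real.norm_of_nonneg (div_nonneg hc₀ ht')]
    exact mul_le_of_le_one_left (norm_nonneg _) (div_le_one_of_le₀ hc ht')
  rcases hx' with rfl | rfl
  · have hdiff : y' - x' = ((t - 1) / t') • (x' - x) := by rw [hy']; module
    exact hdiff ▸ contract (by linarith) (by linarith)
  · have hdiff : y' - x' = (t / t') • (z - x') := by rw [hy']; module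
    exact hdiff ▸ contract (by linarith) htt'

end NormedSpace

section InnerProductSpace

variable {H : Type*} [NormedAddCommGroup H] [InnerProductSpace ℝ H]

theorem strongConvexOn_add_sq_norm_sub {s : Set H} {h : H → ℝ} (hconv : ConvexOn ℝ s h) (ℓ : ℝ)
    (y : H) : StrongConvexOn s ℓ fun w => h w + ℓ / 2 * ‖w - y‖ ^ 2 := by
  have haffine : ConvexOn ℝ s fun w => -ℓ * ⟪y, w⟫ + ℓ / 2 * ‖y‖ ^ 2 :=
    ((-ℓ • innerₛₗ ℝ y).convexOn hconv.1).add_const _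
  rw [strongConvexOn_iff_convex]
  refine (hconv.add haffine).congr fun w _ => ?_
  simp only [Pi.add_apply, norm_sub_sq_real, real_inner_comm w y]
  ring

variable [CompleteSpace H]

theorem add_inner_gradient_sub_le_of_convexOn {s : Set H} {f : H → ℝ} {a b : H}
    (hconv : ConvexOn ℝ s f) (ha : a ∈ s) (hb : b ∈ s) (hf : DifferentiableAt ℝ f a) :
    f a + ⟪∇ f a, b - a⟫ ≤ f b :=
  add_fderiv_sub_le_of_convexOn hconv ha hb hf.hasGradientAt.hasFDerivAt

theorem le_add_inner_gradient_sub_add_sq_of_lipschitz {f : H → ℝ} {L : ℝ} {a : H}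
    (hf : Differentiable ℝ f) (hlip : ∀ w, ‖∇ f w - ∇ f a‖ ≤ L * ‖w - a‖) (b : H) :
    f b ≤ f a + ⟪∇ f a, b - a⟫ + L / 2 * ‖b - a‖ ^ 2 :=
  le_add_fderiv_sub_add_sq_of_lipschitz (fun w => (hf w).hasGradientAt.hasFDerivAt)
    (fun w => by rw [← map_sub, LinearIsometryEquiv.norm_map]; exact hlip w) b

end InnerProductSpace

section ProximalGradient

variable {H : Type*} [NormedAddCommGroup H] [InnerProductSpace ℝ H] [CompleteSpace H]
  {ι : Type*}

/-- The largest increase over `i`, from `x` to `w`, of the objectives `f i + g i` when each `f i` is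
replaced at `w` by its linearization at `y`. -/
noncomputable def maxLinearizedIncrease (f g : ι → H → ℝ) (x y w : H) : ℝ :=
  ⨆ i, (⟪∇ (f i) y, w - y⟫ + g i w + f i y - (f i + g i) x)

/-- The function `φ_{x,y,ℓ}` minimized in a multiobjective proximal gradient step: the reference
point is `x`, the linearization point and proximal center is `y`. -/
noncomputable def proxObjective (f g : ι → H → ℝ) (ℓ : ℝ) (x y w : H) : ℝ :=
  maxLinearizedIncrease f g x y w + ℓ / 2 * ‖w - y‖ ^ 2

variable {f g : ι → H → ℝ} {ℓ : ℝ} {x y z : H}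

theorem maxLinearizedIncrease_self_nonpos [Nonempty ι] (hfc : ∀ i, ConvexOn ℝ univ (f i))
    (hfd : ∀ i, DifferentiableAt ℝ (f i) y) : maxLinearizedIncrease f g x y x ≤ 0 := by
  refine ciSup_le fun i => ?_
  have hgrad : f i y + ⟪∇ (f i) y, x - y⟫ ≤ f i x :=
    add_inner_gradient_sub_le_of_convexOn (hfc i) (mem_univ y) (mem_univ x) (hfd i)
  rw [Pi.add_apply]
  linarith

variable [Finite ι]

theorem convexOn_maxLinearizedIncrease [Nonempty ι] (hgc : ∀ i, ConvexOn ℝ univ (g i)) :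
    ConvexOn ℝ univ (maxLinearizedIncrease f g x y) := by
  refine convexOn_iSup convex_univ (fun i => ?_) fun w _ => (finite_range _).bddAbove
  have hlinear : ConvexOn ℝ univ fun w => ⟪∇ (f i) y, w⟫ :=
    (innerₛₗ ℝ (∇ (f i) y)).convexOn convex_univ
  refine ((hlinear.add (hgc i)).add_const
    (f i y - (f i + g i) x - ⟪∇ (f i) y, y⟫)).congr fun w _ => ?_
  simp only [Pi.add_apply, inner_sub_right]
  ring

theorem sub_le_proxObjective {i : ι} (hfd : Differentiable ℝ (f i))
    (hlip : ∀ w, ‖∇ (f i) w - ∇ (f i) y‖ ≤ ℓ * ‖w - y‖) (w : H) :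
    (f i + g i) w - (f i + g i) x ≤ proxObjective f g ℓ x y w := by
  have hdescent : f i w ≤ f i y + ⟪∇ (f i) y, w - y⟫ + ℓ / 2 * ‖w - y‖ ^ 2 :=
    le_add_inner_gradient_sub_add_sq_of_lipschitz hfd hlip w
  have hmax : ⟪∇ (f i) y, w - y⟫ + g i w + f i y - (f i + g i) x ≤
      maxLinearizedIncrease f g x y w :=
    le_ciSup (f := fun i => ⟪∇ (f i) y, w - y⟫ + g i w + f i y - (f i + g i) x)
      (finite_range _).bddAbove i
  simp only [Pi.add_apply, proxObjective] at hmax ⊢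
  linarith

theorem proxObjective_add_sq_le_of_isMinOn [Nonempty ι] (hgc : ∀ i, ConvexOn ℝ univ (g i))
    (hz : IsMinOn (proxObjective f g ℓ x y) univ z) (w : H) :
    proxObjective f g ℓ x y z + ℓ / 2 * ‖z - w‖ ^ 2 ≤ proxObjective f g ℓ x y w :=
  add_modulus_le_of_uniformConvexOn_of_isMinOn
    (strongConvexOn_add_sq_norm_sub (convexOn_maxLinearizedIncrease hgc) ℓ y)
    (mem_univ z) (mem_univ w) hz

theorem objective_add_sq_le_of_isMinOn_proxObjective (hfc : ∀ i, ConvexOn ℝ univ (f i))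
    (hfd : ∀ i, Differentiable ℝ (f i))
    (hlip : ∀ i a b, ‖∇ (f i) a - ∇ (f i) b‖ ≤ ℓ * ‖a - b‖)
    (hgc : ∀ i, ConvexOn ℝ univ (g i)) (hz : IsMinOn (proxObjective f g ℓ x y) univ z) (i : ι) :
    (f i + g i) z + ℓ / 2 * ‖z - x‖ ^ 2 ≤ (f i + g i) x + ℓ / 2 * ‖y - x‖ ^ 2 := by
  have : Nonempty ι := ⟨i⟩
  have hgrowth := proxObjective_add_sq_le_of_isMinOn hgc hz x
  have hlower : (f i + g i) z - (f i + g i) x ≤ proxObjective f g ℓ x y z :=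
    sub_le_proxObjective (hfd i) (fun w => hlip i w y) z
  have hupper : proxObjective f g ℓ x y x ≤ ℓ / 2 * ‖y - x‖ ^ 2 := by
    rw [proxObjective, norm_sub_rev x y]
    exact add_le_of_nonpos_left (maxLinearizedIncrease_self_nonpos hfc fun i => hfd i y)
  linarith

end ProximalGradient

theorem monotone_of_fista_recursion {t : ℕ → ℝ}
    (ht : ∀ k, 1 ≤ k → t (k + 1) = (1 + √(1 + 4 * t k ^ 2)) / 2) :
    Monotone fun k => t (k + 1) := by
  refine monotone_nat_of_le_succ fun k => ?_
  have hsqrt : 2 * t (k + 1) ≤ √(1 + 4 * t (k + 1) ^ 2) :=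
    Real.le_sqrt_of_sq_le (by linarith)
  rw [ht (k + 1) k.succ_pos]
  linarith

theorem eq_or_eq_and_forall_le_of_iSup_sub {V ι : Type*} [Finite ι] {F : ι → V → ℝ} {x x' z : V}
    (haccept : 0 ≤ (⨆ i, (F i x - F i z)) → x' = z)
    (hreject : ¬ 0 ≤ (⨆ i, (F i x - F i z)) → x' = x) :
    x' = z ∨ x' = x ∧ ∀ i, F i x ≤ F i z := by
  by_cases hmax : 0 ≤ ⨆ i, (F i x - F i z)
  · exact .inl (haccept hmax)
  · refine .inr ⟨hreject hmax, fun i => ?_⟩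
    have hle : F i x - F i z ≤ ⨆ i, (F i x - F i z) :=
      le_ciSup (f := fun i => F i x - F i z) (finite_range _).bddAbove i
    linarith

/-- Always accepting the trial point satisfies `hx`, so the accelerated method without the monotone
safeguard is covered as well. -/
theorem stmt_13_general
    {H : Type*} [NormedAddCommGroup H] [InnerProductSpace ℝ H] [CompleteSpace H]
    {ι : Type*} [Finite ι] {f g : ι → H → ℝ} {ℓ : ℝ} (hℓ : 0 ≤ ℓ)
    (hfc : ∀ i, ConvexOn ℝ univ (f i)) (hfd : ∀ i, Differentiable ℝ (f i))
    (hlip : ∀ i a b, ‖∇ (f i) a - ∇ (f i) b‖ ≤ ℓ * ‖a - b‖)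
    (hgc : ∀ i, ConvexOn ℝ univ (g i))
    {x y z : ℕ → H} {t : ℕ → ℝ} (hy1 : y 1 = x 0) (ht1 : 1 ≤ t 1)
    (ht : Monotone fun k => t (k + 1))
    (hz : ∀ k, IsMinOn (proxObjective f g ℓ (x k) (y (k + 1))) univ (z (k + 1)))
    (hx : ∀ k, x (k + 1) = z (k + 1) ∨
      x (k + 1) = x k ∧ ∀ i, (f i + g i) (x k) ≤ (f i + g i) (z (k + 1)))
    (hy : ∀ k, y (k + 2) = x (k + 1) + (t (k + 1) / t (k + 2)) • (z (k + 1) - x (k + 1)) +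
      ((t (k + 1) - 1) / t (k + 2)) • (x (k + 1) - x k)) (i : ι) (k : ℕ) :
    (f i + g i) (x k) + ℓ / 2 * ‖y (k + 1) - x k‖ ^ 2 ≤ (f i + g i) (x 0) := by
  induction k with
  | zero => simp [hy1]
  | succ k ih =>
    have hvalue : (f i + g i) (x (k + 1)) ≤ (f i + g i) (z (k + 1)) := by
      rcases hx k with haccept | ⟨hreject, hle⟩
      · rw [haccept]
      · rw [hreject]; exact hle i
    have hmove : ‖y (k + 2) - x (k + 1)‖ ≤ ‖z (k + 1) - x k‖ :=
      norm_extrapolation_sub_le (ht1.trans (ht k.zero_le)) (ht k.le_succ)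
        ((hx k).imp_right And.left) (hy k)
    calc (f i + g i) (x (k + 1)) + ℓ / 2 * ‖y (k + 2) - x (k + 1)‖ ^ 2
        ≤ (f i + g i) (z (k + 1)) + ℓ / 2 * ‖z (k + 1) - x k‖ ^ 2 := by gcongr
      _ ≤ (f i + g i) (x k) + ℓ / 2 * ‖y (k + 1) - x k‖ ^ 2 :=
        objective_add_sq_le_of_isMinOn_proxObjective hfc hfd hlip hgc (hz k) i
      _ ≤ (f i + g i) (x 0) := ih

theorem stmt_13
    (n m : ℕ) (hn : 1 ≤ n) (hm : 1 ≤ m)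
    (f g F : Fin m → E n → ℝ)
    (L : Fin m → ℝ) (hL : ∀ i, 0 < L i)
    (hfc : ∀ i, ConvexOn ℝ Set.univ (f i))
    (hfd : ∀ i, ContDiff ℝ 1 (f i))
    (hflip : ∀ i a b, ‖gradient (f i) a - gradient (f i) b‖ ≤ L i * ‖a - b‖)
    (hgc : ∀ i, ConvexOn ℝ Set.univ (g i))
    (hF : ∀ i w, F i w = f i w + g i w)
    (ℓ : ℝ) (hℓ : 0 < ℓ) (hℓL : ∀ i, L i ≤ ℓ)
    (d : E n → E n → E n)
    (hd : ∀ a b w,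
      (⨆ i, (⟪gradient (f i) b, d a b - b⟫ + g i (d a b) + f i b - F i a)) +
          ℓ / 2 * ‖d a b - b‖ ^ 2 ≤
        (⨆ i, (⟪gradient (f i) b, w - b⟫ + g i w + f i b - F i a)) +
          ℓ / 2 * ‖w - b‖ ^ 2)
    (x y z : ℕ → E n) (t : ℕ → ℝ)
    (hy1 : y 1 = x 0) (ht1 : t 1 = 1)
    (ht : ∀ k, 1 ≤ k → t (k + 1) = (1 + Real.sqrt (1 + 4 * t k ^ 2)) / 2)
    (hz : ∀ k, 1 ≤ k → z k = d (x (k - 1)) (y k))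
    (hxpos : ∀ k, 1 ≤ k → 0 ≤ (⨆ i, (F i (x (k - 1)) - F i (z k))) → x k = z k)
    (hxneg : ∀ k, 1 ≤ k → ¬ 0 ≤ (⨆ i, (F i (x (k - 1)) - F i (z k))) → x k = x (k - 1))
    (hy : ∀ k, 1 ≤ k →
      y (k + 1) = x k + (t k / t (k + 1)) • (z k - x k) +
        ((t k - 1) / t (k + 1)) • (x k - x (k - 1))) :
    ∀ (i : Fin m) (k : ℕ), F i (x k) ≤ F i (x 0) := by
  intro i k
  obtain rfl : F = fun i => f i + g i := funext₂ hF
  refine (le_add_of_nonneg_right (by positivity)).trans <|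
    stmt_13_general hℓ.le hfc (fun i => (hfd i).differentiable one_ne_zero) (hlip := ?lipschitz)
      hgc hy1 ht1.ge (monotone_of_fista_recursion ht) (hz := ?minimizer) (hx := ?acceptance)
      (fun k => hy (k + 1) k.succ_pos) i k
  case lipschitz => exact fun i a b => (hflip i a b).trans (by gcongr; exact hℓL i)
  case minimizer =>
    exact fun k => isMinOn_univ_iff.2 (hz (k + 1) k.succ_pos ▸ hd (x k) (y (k + 1)))
  case acceptance =>
    exact fun k => eq_or_eq_and_forall_le_of_iSup_sub (hxpos (k + 1) k.succ_pos)
      (hxneg (k + 1) k.succ_pos)
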